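/- Let (F_x)_{x∈ℝ^d} be a germ, f ∈ D', γ ∈ ℝ, r ∈ ℕ, C < ∞ and K ⊆ ℝ^d such that |(f − F_x)(ψ_x^λ)| ≤ C λ^γ for all x ∈ K, λ ∈ (0,1] and ψ ∈ B_r. Then, with α := min{−r−d, γ}, one has |(F_z − F_y)(ψ_y^λ)| ≤ 2C λ^α (|z−y| + λ)^{γ−α} for all y, z ∈ K with |z−y| ≤ 1/2, all λ ∈ (0,1/2], and all ψ ∈ B_r. -/

import Mathlib

open MeasureTheory Metric Set Filter

noncomputable section

abbrev Ed (d : ℕ) := EuclideanSpace ℝ (Fin d)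

/-- Test functions: smooth compactly supported functions on ℝ^d. -/
def IsTestFunction {d : ℕ} (φ : Ed d → ℝ) : Prop :=
  ContDiff ℝ (⊤ : ℕ∞) φ ∧ HasCompactSupport φ

/-- The scaled test function `φ_x^λ(z) = λ^{-d} φ(λ⁻¹(z - x))`. -/
def scaled {d : ℕ} (φ : Ed d → ℝ) (x : Ed d) (l : ℝ) : Ed d → ℝ :=
  fun z => (l ^ d)⁻¹ * φ (l⁻¹ • (z - x))

/-- The `C^r` norm: sup of the norms of the iterated derivatives of order ≤ r. -/
def Cnorm {d : ℕ} (r : ℕ) (φ : Ed d → ℝ) : ℝ :=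
  ⨆ i : Fin (r + 1), ⨆ x : Ed d, ‖iteratedFDeriv ℝ (i : ℕ) φ x‖

/-- The family `B_r` of test functions supported in `B(0,1)` with `C^r` norm at most 1. -/
def Br {d : ℕ} (r : ℕ) (ψ : Ed d → ℝ) : Prop :=
  IsTestFunction ψ ∧ tsupport ψ ⊆ closedBall (0 : Ed d) 1 ∧ Cnorm r ψ ≤ 1

/-- A linear functional is a distribution if on every compact set it is bounded
by some `C^r` norm. -/
def IsDistribution {d : ℕ} (T : (Ed d → ℝ) →ₗ[ℝ] ℝ) : Prop :=
  ∀ K : Set (Ed d), IsCompact K → ∃ r : ℕ, ∃ C : ℝ,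
    ∀ φ : Ed d → ℝ, IsTestFunction φ → tsupport φ ⊆ K → |T φ| ≤ C * Cnorm r φ

/-- A germ: a measurable family of distributions. -/
def IsGerm {d : ℕ} (F : Ed d → ((Ed d → ℝ) →ₗ[ℝ] ℝ)) : Prop :=
  (∀ x, IsDistribution (F x)) ∧
  ∀ ψ : Ed d → ℝ, IsTestFunction ψ → Measurable fun x => F x ψ

/-- Monomial `y^k` for a multi-index `k`. -/
def mono {d : ℕ} (k : Fin d → ℕ) (y : Ed d) : ℝ := ∏ i, (y i) ^ (k i)

/-- Convolution of two functions. -/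
def conv {d : ℕ} (f g : Ed d → ℝ) : Ed d → ℝ := fun x => ∫ y, f (x - y) * g y

/-- `rIndex α` is the smallest integer `r > -α` (for `α ≤ 0`). -/
def rIndex (α : ℝ) : ℕ := Nat.floor (-α) + 1

/-- Negative Hölder space condition `T ∈ C^α` for `α ≤ 0`. -/
def HolderNeg {d : ℕ} (α : ℝ) (T : (Ed d → ℝ) →ₗ[ℝ] ℝ) : Prop :=
  ∀ K : Set (Ed d), IsCompact K → ∃ C : ℝ, ∀ x ∈ K, ∀ ε ∈ Set.Ioc (0:ℝ) 1,
    ∀ ψ : Ed d → ℝ, Br (rIndex α) ψ → |T (scaled ψ x ε)| ≤ C * ε ^ α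

/-- `(α,γ)`-coherence of a germ with respect to the test function φ. -/
def AlphaGammaCoherent {d : ℕ} (α γ : ℝ) (F : Ed d → ((Ed d → ℝ) →ₗ[ℝ] ℝ))
    (φ : Ed d → ℝ) : Prop :=
  ∀ K : Set (Ed d), IsCompact K → ∃ C : ℝ, ∀ y ∈ K, ∀ z ∈ K, ∀ ε ∈ Set.Ioc (0:ℝ) 1,
    |F z (scaled φ y ε) - F y (scaled φ y ε)| ≤ C * ε ^ α * (‖z - y‖ + ε) ^ (γ - α)

/-- Global homogeneity bound β for a germ with respect to the test function φ. -/
def HomBound {d : ℕ} (β : ℝ) (F : Ed d → ((Ed d → ℝ) →ₗ[ℝ] ℝ)) (φ : Ed d → ℝ) : Prop :=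
  ∀ K : Set (Ed d), IsCompact K → ∃ C : ℝ, ∀ x ∈ K, ∀ ε ∈ Set.Ioc (0:ℝ) 1,
    |F x (scaled φ x ε)| ≤ C * ε ^ β

/-!
If `‖z - y‖ + l ≤ L`, the ball of radius `l` around `y` lies in the ball of radius `L` around `z`,
and `ψ_y^l` is `ξ_z^L` for a rescaled and recentred profile `ξ`. Zooming in by the ratio `l / L`
multiplies the `C^r` norm by at most `(L / l)^(d + r)`, so `ξ` belongs to `(L / l)^(d + r) • B_r`.
Taking `L = ‖z - y‖ + l`, the reconstruction bound at `z` and scale `L` controls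
`(f - F_z)(ψ_y^l)`; the bound at `y` and scale `l` controls `(f - F_y)(ψ_y^l)`.
-/

section Scaling

variable {d : ℕ} {φ : Ed d → ℝ} {x : Ed d} {l : ℝ}

lemma scaled_const_smul (c : ℝ) (φ : Ed d → ℝ) (x : Ed d) (l : ℝ) :
    scaled (c • φ) x l = c • scaled φ x l := by
  funext z
  simp only [scaled, Pi.smul_apply, smul_eq_mul]
  ring

lemma scaled_scaled (φ : Ed d → ℝ) (x a : Ed d) {l : ℝ} (hl : l ≠ 0) (s : ℝ) :
    scaled (scaled φ a s) x l = scaled φ (x + l • a) (l * s) := by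
  funext z
  have hz : s⁻¹ • (l⁻¹ • (z - x) - a) = (l * s)⁻¹ • (z - (x + l • a)) := by
    rw [mul_inv_rev, mul_smul, ← sub_sub, smul_sub l⁻¹ (z - x), inv_smul_smul₀ hl]
  simp only [scaled, hz, mul_pow, mul_inv, mul_assoc]

lemma tsupport_scaled_subset_preimage (φ : Ed d → ℝ) (x : Ed d) (l : ℝ) :
    tsupport (scaled φ x l) ⊆ (fun z ↦ l⁻¹ • (z - x)) ⁻¹' tsupport φ :=
  tsupport_mul_subset_right.trans (tsupport_comp_subset_preimage φ (by fun_prop))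

lemma tsupport_scaled_subset_closedBall {R : ℝ} (hφ : tsupport φ ⊆ closedBall 0 R) (hl : 0 < l) :
    tsupport (scaled φ x l) ⊆ closedBall x (l * R) := by
  intro z hz
  have hz' := hφ (tsupport_scaled_subset_preimage φ x l hz)
  rwa [mem_closedBall_zero_iff, norm_smul, norm_inv, Real.norm_of_nonneg hl.le,
    inv_mul_le_iff₀ hl, ← mem_closedBall_iff_norm] at hz'

lemma norm_iteratedFDeriv_scaled {i : ℕ} (hφ : ContDiff ℝ i φ) (hl : 0 < l) (z : Ed d) :
    ‖iteratedFDeriv ℝ i (scaled φ x l) z‖ =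
      (l ^ (d + i))⁻¹ * ‖iteratedFDeriv ℝ i φ (l⁻¹ • (z - x))‖ := by
  have hcomp : ContDiff ℝ i fun w ↦ φ (l⁻¹ • (w - x)) := by fun_prop
  have hderiv : iteratedFDeriv ℝ i (scaled φ x l) z =
      (l ^ d)⁻¹ • l⁻¹ ^ i • iteratedFDeriv ℝ i φ (l⁻¹ • (z - x)) := by
    rw [← congrFun (iteratedFDeriv_comp_const_smul l⁻¹ hφ) (z - x),
      ← iteratedFDeriv_comp_sub (f := fun w ↦ φ (l⁻¹ • w))]
    exact iteratedFDeriv_const_smul_apply' (a := (l ^ d)⁻¹) hcomp.contDiffAt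
  rw [hderiv, norm_smul, norm_smul, Real.norm_of_nonneg (by positivity),
    Real.norm_of_nonneg (by positivity), ← mul_assoc, inv_pow, ← mul_inv, ← pow_add]

end Scaling

namespace IsTestFunction

variable {d : ℕ} {φ : Ed d → ℝ}

lemma const_smul (hφ : IsTestFunction φ) (c : ℝ) : IsTestFunction (c • φ) :=
  ⟨hφ.1.const_smul c, hφ.2.smul_left (f := fun _ ↦ c)⟩

lemma scaled (hφ : IsTestFunction φ) (x : Ed d) {l : ℝ} (hl : l ≠ 0) :
    IsTestFunction (scaled φ x l) := by
  have hsmooth := hφ.1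
  refine ⟨by unfold _root_.scaled; fun_prop, HasCompactSupport.mul_left ?_⟩
  exact hφ.2.comp_homeomorph
    ((Homeomorph.subRight x).trans (Homeomorph.smulOfNeZero l⁻¹ (inv_ne_zero hl)))

lemma norm_iteratedFDeriv_le_Cnorm (hφ : IsTestFunction φ) {i r : ℕ} (hi : i ≤ r) (x : Ed d) :
    ‖iteratedFDeriv ℝ i φ x‖ ≤ Cnorm r φ := by
  have hbdd : BddAbove (range fun x ↦ ‖iteratedFDeriv ℝ i φ x‖) :=
    (hφ.1.continuous_iteratedFDeriv (mod_cast le_top)).norm.bddAbove_range_of_hasCompactSupport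
      (hφ.2.iteratedFDeriv i).norm
  calc ‖iteratedFDeriv ℝ i φ x‖ ≤ ⨆ x, ‖iteratedFDeriv ℝ i φ x‖ := le_ciSup hbdd x
    _ ≤ Cnorm r φ :=
      le_ciSup (f := fun j : Fin (r + 1) ↦ ⨆ x, ‖iteratedFDeriv ℝ (j : ℕ) φ x‖)
        (finite_range _).bddAbove ⟨i, Nat.lt_succ_of_le hi⟩

end IsTestFunction

section Cnorm

variable {d r : ℕ} {φ : Ed d → ℝ}

lemma Cnorm_le {M : ℝ} (h : ∀ i ≤ r, ∀ x, ‖iteratedFDeriv ℝ i φ x‖ ≤ M) : Cnorm r φ ≤ M :=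
  ciSup_le fun i ↦ ciSup_le fun x ↦ h i (Nat.le_of_lt_succ i.isLt) x

lemma Cnorm_const_smul (hφ : ContDiff ℝ r φ) (c : ℝ) : Cnorm r (c • φ) = |c| * Cnorm r φ := by
  have hderiv (i : Fin (r + 1)) (x : Ed d) :
      ‖iteratedFDeriv ℝ (i : ℕ) (c • φ) x‖ = |c| * ‖iteratedFDeriv ℝ (i : ℕ) φ x‖ := by
    have hi : ContDiff ℝ (i : ℕ) φ := hφ.of_le (mod_cast Nat.le_of_lt_succ i.isLt)
    rw [iteratedFDeriv_const_smul_apply hi.contDiffAt, norm_smul, Real.norm_eq_abs]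
  simp only [Cnorm, hderiv, Real.mul_iSup_of_nonneg (abs_nonneg c)]

lemma Cnorm_scaled_le (hφ : IsTestFunction φ) (x : Ed d) {l : ℝ} (hl₀ : 0 < l) (hl₁ : l ≤ 1) :
    Cnorm r (scaled φ x l) ≤ (l ^ (d + r))⁻¹ * Cnorm r φ := by
  refine Cnorm_le fun i hi z ↦ ?_
  have hpow : l ^ (d + r) ≤ l ^ (d + i) := pow_le_pow_of_le_one hl₀.le hl₁ (by lia)
  rw [norm_iteratedFDeriv_scaled (hφ.1.of_le (mod_cast le_top)) hl₀]
  gcongr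
  exact hφ.norm_iteratedFDeriv_le_Cnorm hi _

end Cnorm

namespace Br

variable {d r : ℕ} {ψ : Ed d → ℝ}

lemma pow_smul_scaled (hψ : Br r ψ) {x : Ed d} {l : ℝ} (hl : 0 < l) (hxl : ‖x‖ + l ≤ 1) :
    Br r (l ^ (d + r) • scaled ψ x l) := by
  obtain ⟨htest, hsupp, hnorm⟩ := hψ
  have htest' := htest.scaled x hl.ne'
  have hl₁ : l ≤ 1 := by linarith [norm_nonneg x]
  refine ⟨htest'.const_smul _, ?_, ?_⟩
  · calc tsupport (l ^ (d + r) • scaled ψ x l) ⊆ tsupport (scaled ψ x l) :=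
          tsupport_smul_subset_right (fun _ ↦ l ^ (d + r)) _
      _ ⊆ closedBall x (l * 1) := tsupport_scaled_subset_closedBall hsupp hl
      _ ⊆ closedBall 0 1 := closedBall_subset_closedBall' (by simpa [add_comm] using hxl)
  · calc Cnorm r (l ^ (d + r) • scaled ψ x l) = l ^ (d + r) * Cnorm r (scaled ψ x l) := by
          rw [Cnorm_const_smul (htest'.1.of_le (mod_cast le_top)), abs_of_pos (by positivity)]
      _ ≤ l ^ (d + r) * ((l ^ (d + r))⁻¹ * Cnorm r ψ) := by
          gcongr
          exact Cnorm_scaled_le htest x hl hl₁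
      _ = Cnorm r ψ := mul_inv_cancel_left₀ (by positivity) _
      _ ≤ 1 := hnorm

lemma exists_scaled_eq_smul_scaled (hψ : Br r ψ) {y z : Ed d} {l L : ℝ} (hl : 0 < l)
    (hL : ‖z - y‖ + l ≤ L) :
    ∃ ξ, Br r ξ ∧ scaled ψ y l = (L / l) ^ (d + r) • scaled ξ z L := by
  have hL₀ : 0 < L := by linarith [norm_nonneg (z - y)]
  have hball : ‖L⁻¹ • (y - z)‖ + l / L ≤ 1 := by
    rw [norm_smul, norm_inv, Real.norm_of_nonneg hL₀.le, norm_sub_rev, inv_mul_eq_div,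
      ← add_div]
    exact div_le_one_of_le₀ hL hL₀.le
  refine ⟨_, hψ.pow_smul_scaled (div_pos hl hL₀) hball, ?_⟩
  rw [scaled_const_smul, scaled_scaled _ _ _ hL₀.ne', smul_inv_smul₀ hL₀.ne', add_sub_cancel,
    mul_div_cancel₀ _ hL₀.ne', smul_smul, ← mul_pow, div_mul_div_cancel₀ hl.ne',
    div_self hL₀.ne', one_pow, one_smul]

lemma abs_apply_scaled_le (hψ : Br r ψ) {y z : Ed d} {l L B : ℝ} (hl : 0 < l)
    (hL : ‖z - y‖ + l ≤ L) (T : (Ed d → ℝ) →ₗ[ℝ] ℝ) (hT : ∀ ξ, Br r ξ → |T (scaled ξ z L)| ≤ B) :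
    |T (scaled ψ y l)| ≤ (L / l) ^ (d + r) * B := by
  have hL₀ : 0 < L := by linarith [norm_nonneg (z - y)]
  obtain ⟨ξ, hξ, hscaled⟩ := hψ.exists_scaled_eq_smul_scaled hl hL
  rw [hscaled, map_smul, smul_eq_mul, abs_mul, abs_of_pos (by positivity)]
  gcongr
  exact hT ξ hξ

end Br

section Rpow

variable {l L α γ : ℝ}

lemma rpow_le_rpow_mul_rpow_sub (hl : 0 < l) (hlL : l ≤ L) (hα : α ≤ γ) :
    l ^ γ ≤ l ^ α * L ^ (γ - α) :=
  calc l ^ γ = l ^ α * l ^ (γ - α) := by rw [← Real.rpow_add hl, add_sub_cancel]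
    _ ≤ l ^ α * L ^ (γ - α) := by
      have : 0 ≤ γ - α := sub_nonneg.2 hα
      gcongr

lemma div_rpow_mul_rpow_le (hl : 0 < l) (hlL : l ≤ L) {s : ℝ} (hα : α ≤ -s) (γ : ℝ) :
    (L / l) ^ s * L ^ γ ≤ l ^ α * L ^ (γ - α) := by
  have hL : 0 < L := hl.trans_le hlL
  calc (L / l) ^ s * L ^ γ = l ^ (-s) * L ^ (s + γ) := by
        rw [Real.div_rpow hL.le hl.le, Real.rpow_neg hl.le, Real.rpow_add hL]
        ring
    _ ≤ l ^ α * L ^ (-s - α) * L ^ (s + γ) := by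
        gcongr
        exact rpow_le_rpow_mul_rpow_sub hl hlL hα
    _ = l ^ α * L ^ (γ - α) := by
        rw [mul_assoc, ← Real.rpow_add hL]
        ring_nf

end Rpow

theorem stmt6_general {d : ℕ} (F : Ed d → ((Ed d → ℝ) →ₗ[ℝ] ℝ))
    (f : (Ed d → ℝ) →ₗ[ℝ] ℝ) (γ : ℝ) (r : ℕ) (C : ℝ) (K : Set (Ed d))
    (h : ∀ x ∈ K, ∀ l ∈ Set.Ioc (0 : ℝ) 1, ∀ ψ : Ed d → ℝ, Br r ψ →
      |f (scaled ψ x l) - F x (scaled ψ x l)| ≤ C * l ^ γ) :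
    ∀ y ∈ K, ∀ z ∈ K, ∀ l : ℝ, 0 < l → ‖z - y‖ + l ≤ 1 → ∀ ψ : Ed d → ℝ, Br r ψ →
      |F z (scaled ψ y l) - F y (scaled ψ y l)| ≤
        2 * C * l ^ (min (-(r : ℝ) - d) γ) * (‖z - y‖ + l) ^ (γ - min (-(r : ℝ) - d) γ) := by
  intro y hy z hz l hl hL₁ ψ hψ
  set L := ‖z - y‖ + l
  set α := min (-(r : ℝ) - d) γ
  have hlL : l ≤ L := le_add_of_nonneg_left (norm_nonneg _)
  have hα : α ≤ -((d + r : ℕ) : ℝ) := (min_le_left _ _).trans_eq (by push_cast; ring)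
  have hboundY : |f (scaled ψ y l) - F y (scaled ψ y l)| ≤ C * l ^ γ :=
    h y hy l ⟨hl, hlL.trans hL₁⟩ ψ hψ
  have hboundZ : |f (scaled ψ y l) - F z (scaled ψ y l)| ≤ (L / l) ^ (d + r) * (C * L ^ γ) :=
    hψ.abs_apply_scaled_le hl le_rfl (f - F z) (h z hz L ⟨hl.trans_le hlL, hL₁⟩)
  have hC : 0 ≤ C :=
    nonneg_of_mul_nonneg_left ((abs_nonneg _).trans hboundY) (Real.rpow_pos_of_pos hl γ)
  have hscaleY : l ^ γ ≤ l ^ α * L ^ (γ - α) :=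
    rpow_le_rpow_mul_rpow_sub hl hlL (min_le_right _ _)
  have hscaleZ : (L / l) ^ (d + r) * L ^ γ ≤ l ^ α * L ^ (γ - α) :=
    mod_cast div_rpow_mul_rpow_le hl hlL hα γ
  calc |F z (scaled ψ y l) - F y (scaled ψ y l)|
      ≤ |f (scaled ψ y l) - F z (scaled ψ y l)| + |f (scaled ψ y l) - F y (scaled ψ y l)| := by
        rw [abs_sub_comm (f _) (F z _)]
        exact abs_sub_le _ _ _
    _ ≤ (L / l) ^ (d + r) * (C * L ^ γ) + C * l ^ γ := add_le_add hboundZ hboundY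
    _ = C * ((L / l) ^ (d + r) * L ^ γ + l ^ γ) := by ring
    _ ≤ C * (l ^ α * L ^ (γ - α) + l ^ α * L ^ (γ - α)) := by gcongr
    _ = 2 * C * l ^ α * L ^ (γ - α) := by ring

/-- Coherence is necessary for the reconstruction bound. -/
theorem stmt6 {d : ℕ} (F : Ed d → ((Ed d → ℝ) →ₗ[ℝ] ℝ))
    (f : (Ed d → ℝ) →ₗ[ℝ] ℝ) (γ : ℝ) (r : ℕ) (C : ℝ) (K : Set (Ed d))
    (h : ∀ x ∈ K, ∀ l ∈ Set.Ioc (0:ℝ) 1, ∀ ψ : Ed d → ℝ, Br r ψ →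
      |f (scaled ψ x l) - F x (scaled ψ x l)| ≤ C * l ^ γ) :
    ∀ y ∈ K, ∀ z ∈ K, ‖z - y‖ ≤ 1/2 → ∀ l ∈ Set.Ioc (0:ℝ) (1/2),
      ∀ ψ : Ed d → ℝ, Br r ψ →
        |F z (scaled ψ y l) - F y (scaled ψ y l)| ≤
          2 * C * l ^ (min (-(r:ℝ) - d) γ) * (‖z - y‖ + l) ^ (γ - min (-(r:ℝ) - d) γ) := by
  intro y hy z hz hzy l hl ψ hψ
  exact stmt6_general F f γ r C K h y hy z hz l hl.1 (by linarith [hl.2]) ψ hψ
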